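/- Well-definedness of P_w: in the Coxeter setting below, let w ∈ W and let (s_1, …, s_l) and (s'_1, …, s'_l) be two reduced words for w, i.e. σ_{s_1} ⋯ σ_{s_l} = σ_{s'_1} ⋯ σ_{s'_l} = w with l = ℓ(w) the length of w. Then P_{α_{s_1}} ∘ ⋯ ∘ P_{α_{s_l}} = P_{α_{s'_1}} ∘ ⋯ ∘ P_{α_{s'_l}} as transformations of the set of continuous paths π : [0,T] → V with π(0) = 0. -/

import Mathlib

/-- The Pitman transform associated with a pair `(α, α∨)`:
`P_α π (t) = π t − (inf_{0 ≤ s ≤ t} α∨(π s)) • α`. -/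
noncomputable def pitman {V : Type*} [AddCommGroup V] [Module ℝ V]
    (α : V) (αv : Module.Dual ℝ V) (π : ℝ → V) : ℝ → V :=
  fun t => π t - sInf ((fun s => αv (π s)) '' Set.Icc 0 t) • α

/-- The composite Pitman transform `P_{α_{s₁}} ∘ ⋯ ∘ P_{α_{s_l}}` along a word
`l = [s₁, …, s_l]` in the generators. -/
noncomputable def pitmanWord {V : Type*} [AddCommGroup V] [Module ℝ V] {B : Type*}
    (α : B → V) (αv : B → Module.Dual ℝ V) (l : List B) : (ℝ → V) → (ℝ → V) :=
  l.foldr (fun s f => pitman (α s) (αv s) ∘ f) id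

/-!
By Matsumoto's theorem any two reduced words are connected by braid moves, so it suffices to treat
the two alternating words of length `m = m(a, b)`. Rescaling `(α_a, α_a∨)` to `(c α_a, c⁻¹ α_a∨)`
with `c > 0` changes no Pitman transform, so both off-diagonal pairings may be taken to be
`-2 cos (π / m)`. A composite along an alternating word of length `n ≤ m` then subtracts from a path
multiples of `α_a` and `α_b` whose coefficients are nested infima of `n` and `n - 1` terms, weighted
by `S_j (2 cos (π / m)) = sin ((j + 1) π / m) / sin (π / m)`. These weights are nonnegative for
`j < m`, which allows an induction on `n`, and the weight with `j = m - 1` vanishes, so that for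
`n = m` the last infimum drops out and the formula becomes symmetric in `a` and `b`.

Matsumoto's theorem follows from the exchange property, which holds because the parity of the number
of times an element occurs among the right inversions of a word depends only on the product of the
word, and from the fact that the product of two distinct generators has order `m(a, b)`, as the
geometric representation shows.
-/

open Set

section RunningInf

/-- The running infimum of `f` over `[0, t]`. For `t < 0` the interval is empty and the value is the
junk value `0`. -/
noncomputable def runningInf (f : ℝ → ℝ) (t : ℝ) : ℝ :=
  sInf (f '' Icc 0 t)

theorem runningInf_of_neg (f : ℝ → ℝ) {t : ℝ} (ht : t < 0) : runningInf f t = 0 := by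
  rw [runningInf, Icc_eq_empty (not_le.2 ht), image_empty, Real.sInf_empty]

theorem runningInf_const_mul {c : ℝ} (hc : 0 ≤ c) (f : ℝ → ℝ) (t : ℝ) :
    runningInf (fun s => c * f s) t = c * runningInf f t := by
  simp only [runningInf, sInf_image']
  exact (Real.mul_iInf_of_nonneg hc _).symm

theorem runningInf_congr {f g : ℝ → ℝ} {t : ℝ} (h : EqOn f g (Icc 0 t)) :
    runningInf f t = runningInf g t := by
  rw [runningInf, runningInf, h.image_eq]

theorem exists_eq_runningInf {f : ℝ → ℝ} (hf : ContinuousOn f (Ici 0)) {t : ℝ} (ht : 0 ≤ t) :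
    ∃ s ∈ Icc 0 t, runningInf f t = f s :=
  isCompact_Icc.exists_sInf_image_eq (nonempty_Icc.2 ht) (hf.mono Icc_subset_Ici_self)

theorem runningInf_le {f : ℝ → ℝ} (hf : ContinuousOn f (Ici 0)) {s t : ℝ} (hs : s ∈ Icc 0 t) :
    runningInf f t ≤ f s :=
  csInf_le (isCompact_Icc.image_of_continuousOn (hf.mono Icc_subset_Ici_self)).bddBelow
    (mem_image_of_mem f hs)

theorem le_runningInf {f : ℝ → ℝ} {t c : ℝ} (ht : 0 ≤ t) (h : ∀ s ∈ Icc 0 t, c ≤ f s) :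
    c ≤ runningInf f t :=
  le_csInf ((nonempty_Icc.2 ht).image f) (forall_mem_image.2 h)

theorem antitoneOn_runningInf {f : ℝ → ℝ} (hf : ContinuousOn f (Ici 0)) :
    AntitoneOn (runningInf f) (Ici 0) := fun _ hs _ _ hst =>
  le_runningInf hs fun _ hr => runningInf_le hf ⟨hr.1, hr.2.trans hst⟩

theorem continuousOn_runningInf {f : ℝ → ℝ} (hf : ContinuousOn f (Ici 0)) :
    ContinuousOn (runningInf f) (Ici 0) := by
  have hmax : Continuous fun t => f (max t 0) :=
    hf.comp_continuous (by fun_prop) fun t => le_max_right t 0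
  -- Rescaling time puts all the infima over the same compact interval `[0, 1]`.
  have hsInf : Continuous fun t => sInf ((fun r => f (max (r * t) 0)) '' Icc (0 : ℝ) 1) :=
    isCompact_Icc.continuous_sInf (f := fun t r => f (max (r * t) 0))
      (hmax.comp (by fun_prop : Continuous fun p : ℝ × ℝ => p.2 * p.1))
  refine hsInf.continuousOn.congr fun t (ht : 0 ≤ t) => ?_
  have hIcc : Icc 0 t = (· * t) '' Icc 0 1 := by
    rcases ht.eq_or_lt with rfl | ht
    · simp [(nonempty_Icc.2 zero_le_one).image_const]
    · simp [image_mul_right_Icc zero_le_one ht.le]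
  rw [runningInf, hIcc, image_image]
  congr 1
  exact image_congr fun r hr => by rw [max_eq_left (mul_nonneg hr.1 ht)]

theorem exists_eq_runningInf_of_lt {f : ℝ → ℝ} (hf : ContinuousOn f (Ici 0)) {u t : ℝ} (ht : 0 ≤ t)
    (hlt : runningInf f t < runningInf f u) : ∃ r ∈ Icc u t, runningInf f t = f r := by
  obtain ⟨r, hr, hfr⟩ := exists_eq_runningInf hf ht
  refine ⟨r, ⟨?_, hr.2⟩, hfr⟩
  by_contra! hru
  exact hlt.not_ge (hfr ▸ runningInf_le hf ⟨hr.1, hru.le⟩)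

theorem exists_hitting_runningInf {f : ℝ → ℝ} (hf : ContinuousOn f (Ici 0)) {u t : ℝ} (hu : 0 ≤ u)
    (hut : u ≤ t) (hlt : runningInf f t < runningInf f u) :
    ∃ s ∈ Icc u t, f s = runningInf f u ∧ runningInf f s = runningInf f u := by
  obtain ⟨r, hr, hfr⟩ := exists_eq_runningInf_of_lt hf (hu.trans hut) hlt
  have hcont : ContinuousOn f (Icc u t) := hf.mono fun s hs => hu.trans hs.1
  obtain ⟨s, ⟨hs, hfs⟩, hmin⟩ :=
    (isCompact_Icc.of_isClosed_subset
      (hcont.preimage_isClosed_of_isClosed isClosed_Icc isClosed_Iic)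
      inter_subset_left).exists_isLeast ⟨r, hr, (hfr ▸ hlt.le : f r ≤ runningInf f u)⟩
  have hfs_eq : f s = runningInf f u := by
    obtain ⟨q, hq, hfq⟩ := intermediate_value_Icc' hs.1 (hcont.mono (Icc_subset_Icc_right hs.2))
      ⟨hfs, runningInf_le hf ⟨hu, le_rfl⟩⟩
    rwa [← hq.2.antisymm (hmin ⟨⟨hq.1, hq.2.trans hs.2⟩, hfq.le⟩)]
  refine ⟨s, hs, hfs_eq, le_antisymm (antitoneOn_runningInf hf hu (hu.trans hs.1) hs.1) ?_⟩
  refine le_runningInf (hu.trans hs.1) fun q hq => ?_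
  rcases le_total q u with hqu | huq
  · exact runningInf_le hf ⟨hq.1, hqu⟩
  · by_contra! hfq
    have hsq : s = q := (hmin ⟨⟨huq, hq.2.trans hs.2⟩, hfq.le⟩).antisymm hq.2
    exact hfq.ne (hsq ▸ hfs_eq)

theorem exists_sub_two_mul_runningInf_le {f : ℝ → ℝ} (hf : ContinuousOn f (Ici 0)) {u s t : ℝ}
    (hu : 0 ≤ u) (hus : u ≤ s) (hst : s ≤ t) :
    ∃ r ∈ Icc u t, f r - 2 * runningInf f r ≤ f s - runningInf f t - runningInf f u := by
  have hs : 0 ≤ s := hu.trans hus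
  rcases (antitoneOn_runningInf hf hu (hu.trans (hus.trans hst)) (hus.trans hst)).eq_or_lt
    with heq | hlt
  · have := antitoneOn_runningInf hf hs (hs.trans hst) hst
    exact ⟨s, ⟨hus, hst⟩, by linarith⟩
  · obtain ⟨r, hr, hfr, hIr⟩ := exists_hitting_runningInf hf hu (hus.trans hst) hlt
    have := runningInf_le hf ⟨hs, hst⟩
    exact ⟨r, hr, by linarith⟩

theorem exists_le_sub_two_mul_runningInf {f : ℝ → ℝ} (hf : ContinuousOn f (Ici 0)) {u s t : ℝ}
    (hu : 0 ≤ u) (hus : u ≤ s) (hst : s ≤ t) :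
    ∃ r ∈ Icc u t, f r - runningInf f t - runningInf f u ≤ f s - 2 * runningInf f s := by
  have hs : 0 ≤ s := hu.trans hus
  have hIus := antitoneOn_runningInf hf hu hs hus
  have hIst := antitoneOn_runningInf hf hs (hs.trans hst) hst
  rcases (hIst.trans hIus).eq_or_lt with heq | hlt
  · exact ⟨s, ⟨hus, hst⟩, by linarith⟩
  · obtain ⟨r, hr, hfr⟩ := exists_eq_runningInf_of_lt hf (hs.trans hst) hlt
    have := runningInf_le hf ⟨hs, le_rfl⟩
    exact ⟨r, hr, by linarith⟩

theorem runningInf_sub_two_mul_add_runningInf {Z X : ℝ → ℝ} (hZ : ContinuousOn Z (Ici 0))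
    (hX : ContinuousOn X (Ici 0)) (t : ℝ) :
    runningInf (fun s => Z s - 2 * runningInf Z s + runningInf (fun u => X u + runningInf Z u) s) t
      = runningInf (fun s => Z s + runningInf X s) t - runningInf Z t := by
  rcases lt_or_ge t 0 with ht | ht
  · simp [runningInf_of_neg _ ht]
  have hI := continuousOn_runningInf hZ
  have hXI : ContinuousOn (fun u => X u + runningInf Z u) (Ici 0) := hX.add hI
  have hL := (hZ.fun_sub (hI.const_mul 2)).fun_add (continuousOn_runningInf hXI)
  have hR := hZ.fun_add (continuousOn_runningInf hX)
  apply le_antisymm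
  · obtain ⟨s, hs, hseq⟩ := exists_eq_runningInf hR ht
    obtain ⟨u, hu, hueq⟩ := exists_eq_runningInf hX hs.1
    obtain ⟨r, hr, hle⟩ := exists_sub_two_mul_runningInf_le hZ hu.1 hu.2 hs.2
    have h₁ := runningInf_le hL ⟨hu.1.trans hr.1, hr.2⟩
    have h₂ := runningInf_le hXI ⟨hu.1, hr.1⟩
    linarith
  · obtain ⟨s, hs, hseq⟩ := exists_eq_runningInf hL ht
    obtain ⟨u, hu, hueq⟩ := exists_eq_runningInf hXI hs.1
    obtain ⟨r, hr, hle⟩ := exists_le_sub_two_mul_runningInf hZ hu.1 hu.2 hs.2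
    have h₁ := runningInf_le hR ⟨hu.1.trans hr.1, hr.2⟩
    have h₂ := runningInf_le hX ⟨hu.1, hr.1⟩
    linarith

end RunningInf

section NestedInf

open Polynomial.Chebyshev

/-- The nested infimum `inf_{t ≥ s₁ ≥ ⋯ ≥ s_d} (S_j f(s₁) + S_{j+1} g(s₂) + S_{j+2} f(s₃) + ⋯)` of
`d` terms, where `f` and `g` alternate and the weights are the values at `x` of the Chebyshev
polynomials `S_j, S_{j+1}, …`. The coefficients of a composite of Pitman transforms along an
alternating word are of this form. -/
noncomputable def nestedInf (x : ℝ) : ℕ → ℕ → (ℝ → ℝ) → (ℝ → ℝ) → ℝ → ℝ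
  | 0, _, _, _ => fun _ => 0
  | d + 1, j, f, g => runningInf fun s => (S ℝ j).eval x * f s + nestedInf x d (j + 1) g f s

variable {x : ℝ} {f g : ℝ → ℝ}

theorem nestedInf_zero (x : ℝ) (j : ℕ) (f g : ℝ → ℝ) : nestedInf x 0 j f g = fun _ => 0 := rfl

theorem nestedInf_succ (x : ℝ) (d j : ℕ) (f g : ℝ → ℝ) :
    nestedInf x (d + 1) j f g =
      runningInf fun s => (S ℝ j).eval x * f s + nestedInf x d (j + 1) g f s := rfl

theorem continuousOn_nestedInf (hf : ContinuousOn f (Ici 0)) (hg : ContinuousOn g (Ici 0))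
    (d j : ℕ) : ContinuousOn (nestedInf x d j f g) (Ici 0) := by
  induction d generalizing j f g with
  | zero => exact continuousOn_const
  | succ d ih => exact continuousOn_runningInf ((hf.const_mul _).fun_add (ih hg hf (j + 1)))

theorem nestedInf_succ_eq_of_eval_S_eq_zero {d j : ℕ} (h : (S ℝ ↑(j + d)).eval x = 0) :
    nestedInf x (d + 1) j f g = nestedInf x d j f g := by
  induction d generalizing j f g with
  | zero =>
    funext t
    have hconst := runningInf_const_mul le_rfl f t
    rw [add_zero] at h
    simpa [nestedInf_succ, nestedInf_zero, h] using hconst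
  | succ d ih =>
    rw [nestedInf_succ, ih (by rwa [add_right_comm, add_assoc]), nestedInf_succ]

theorem eval_S_succ_add_eval_S_pred (x : ℝ) (j : ℕ) :
    (S ℝ ↑(j + 1)).eval x + (S ℝ (j - 1)).eval x = x * (S ℝ j).eval x := by
  have := S_add_one ℝ j
  simp [this]

theorem nestedInf_odd_of_even {e j : ℕ}
    (heven : ∀ t, nestedInf x (2 * e) (j + 1) (fun s => f s - 2 * runningInf f s)
      (fun s => g s + x * runningInf f s) t =
        nestedInf x (2 * e + 1) (j + 1) f g t - (S ℝ ↑(j + 1)).eval x * runningInf f t) :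
    nestedInf x (2 * e + 1) j (fun s => g s + x * runningInf f s)
      (fun s => f s - 2 * runningInf f s) =
        runningInf fun s => (S ℝ j).eval x * g s + (S ℝ (j - 1)).eval x * runningInf f s +
          nestedInf x (2 * e + 1) (j + 1) f g s := by
  rw [nestedInf_succ]
  congr 1
  funext s
  rw [heven]
  linear_combination -runningInf f s * eval_S_succ_add_eval_S_pred x j

theorem nestedInf_even (hf : ContinuousOn f (Ici 0)) (hg : ContinuousOn g (Ici 0)) {e j : ℕ}
    (hS : ∀ i : ℕ, i ≤ j + 2 * e → 0 ≤ (S ℝ i).eval x) (t : ℝ) :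
    nestedInf x (2 * e) j (fun s => f s - 2 * runningInf f s)
      (fun s => g s + x * runningInf f s) t =
        nestedInf x (2 * e + 1) j f g t - (S ℝ j).eval x * runningInf f t := by
  induction e generalizing j t with
  | zero => simp [nestedInf_succ, nestedInf_zero, runningInf_const_mul (hS j le_rfl)]
  | succ e ih =>
    have hSj := hS j (by omega)
    have hodd := nestedInf_odd_of_even (ih (j := j + 1 + 1) fun i hi => hS i (by omega))
    have hkey := runningInf_sub_two_mul_add_runningInf (hf.const_mul ((S ℝ j).eval x))
      ((hg.const_mul ((S ℝ ↑(j + 1)).eval x)).fun_add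
        (continuousOn_nestedInf (x := x) hf hg (2 * e + 1) (j + 1 + 1))) t
    simp only [runningInf_const_mul hSj] at hkey
    rw [mul_add_one, nestedInf_succ x (2 * e + 1), hodd, nestedInf_succ x (2 * e + 1 + 1),
      nestedInf_succ x (2 * e + 1), ← hkey]
    congr 1
    funext s
    rw [mul_sub, mul_left_comm, Nat.cast_succ, add_sub_cancel_right]
    congr 2
    funext u
    ring

theorem nestedInf_odd (hf : ContinuousOn f (Ici 0)) (hg : ContinuousOn g (Ici 0)) {e : ℕ}
    (hS : ∀ i : ℕ, i ≤ 2 * e + 1 → 0 ≤ (S ℝ i).eval x) :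
    nestedInf x (2 * e + 1) 0 (fun s => g s + x * runningInf f s)
      (fun s => f s - 2 * runningInf f s) = nestedInf x (2 * e + 2) 0 g f := by
  rw [nestedInf_odd_of_even (nestedInf_even hf hg fun i hi => hS i (by omega)),
    nestedInf_succ x (2 * e + 1)]
  simp

theorem sin_mul_pi_div_pos {m k : ℕ} (hk : 0 < k) (hkm : k < m) :
    0 < Real.sin (k * (Real.pi / m)) := by
  have hm : (0 : ℝ) < m := by exact_mod_cast Nat.zero_lt_of_lt hkm
  refine Real.sin_pos_of_pos_of_lt_pi (by positivity) ?_
  rw [mul_div_left_comm]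
  exact mul_lt_of_lt_one_right Real.pi_pos ((div_lt_one hm).2 (by exact_mod_cast hkm))

theorem sin_pi_div_pos {m : ℕ} (hm : 2 ≤ m) : 0 < Real.sin (Real.pi / m) := by
  simpa using sin_mul_pi_div_pos one_pos hm

theorem eval_S_two_mul_cos_pos {m i : ℕ} (hi : i + 1 < m) :
    0 < (S ℝ i).eval (2 * Real.cos (Real.pi / m)) := by
  refine pos_of_mul_pos_left ?_ (sin_pi_div_pos (by omega : 2 ≤ m)).le
  rw [S_two_mul_real_cos]
  exact_mod_cast sin_mul_pi_div_pos i.succ_pos hi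

theorem eval_S_two_mul_cos_eq_zero {m i : ℕ} (hm : 2 ≤ m) (hi : i + 1 = m) :
    (S ℝ i).eval (2 * Real.cos (Real.pi / m)) = 0 := by
  subst hi
  refine (mul_eq_zero.1 ?_).resolve_right (sin_pi_div_pos hm).ne'
  rw [S_two_mul_real_cos, ← Real.sin_pi]
  congr 1
  push_cast
  field_simp

theorem eval_S_two_mul_cos_nonneg {m i : ℕ} (hm : 2 ≤ m) (hi : i < m) :
    0 ≤ (S ℝ i).eval (2 * Real.cos (Real.pi / m)) := by
  rcases Nat.lt_or_eq_of_le (Nat.succ_le_of_lt hi) with hlt | heq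
  · exact (eval_S_two_mul_cos_pos hlt).le
  · exact (eval_S_two_mul_cos_eq_zero hm heq).ge

end NestedInf

section Pitman

variable {V : Type*} [AddCommGroup V] [Module ℝ V]

theorem pitman_apply (α : V) (αv : Module.Dual ℝ V) (π : ℝ → V) (t : ℝ) :
    pitman α αv π t = π t - runningInf (fun s => αv (π s)) t • α := rfl

theorem dual_pitman_apply (β αv : Module.Dual ℝ V) (α : V) (π : ℝ → V) (t : ℝ) :
    β (pitman α αv π t) = β (π t) - β α * runningInf (fun s => αv (π s)) t := by
  rw [pitman_apply, map_sub, map_smul, smul_eq_mul, mul_comm]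

theorem pitman_smul_inv_smul (α : V) (αv : Module.Dual ℝ V) {c : ℝ} (hc : 0 < c) :
    pitman (c • α) (c⁻¹ • αv) = pitman α αv := by
  funext π t
  simp only [pitman_apply, LinearMap.smul_apply, smul_eq_mul,
    runningInf_const_mul (inv_nonneg.2 hc.le)]
  rw [mul_comm, mul_smul, inv_smul_smul₀ hc.ne']

theorem pitman_congr (α : V) (αv : Module.Dual ℝ V) {T : ℝ} {π π' : ℝ → V}
    (h : EqOn π π' (Icc 0 T)) : EqOn (pitman α αv π) (pitman α αv π') (Icc 0 T) := fun t ht => by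
  rw [pitman_apply, pitman_apply, h ht,
    runningInf_congr fun s hs => congrArg αv (h ⟨hs.1, hs.2.trans ht.2⟩)]

variable {B : Type*} (α : B → V) (αv : B → Module.Dual ℝ V)

theorem pitmanWord_cons (s : B) (l : List B) (π : ℝ → V) :
    pitmanWord α αv (s :: l) π = pitman (α s) (αv s) (pitmanWord α αv l π) := rfl

theorem pitmanWord_append (l l' : List B) (π : ℝ → V) :
    pitmanWord α αv (l ++ l') π = pitmanWord α αv l (pitmanWord α αv l' π) := by
  induction l with
  | nil => rfl
  | cons s l ih => rw [List.cons_append, pitmanWord_cons, ih, pitmanWord_cons]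

theorem pitmanWord_concat (l : List B) (s : B) (π : ℝ → V) :
    pitmanWord α αv (l.concat s) π = pitmanWord α αv l (pitman (α s) (αv s) π) := by
  rw [List.concat_eq_append, pitmanWord_append]
  rfl

theorem pitmanWord_congr (l : List B) {T : ℝ} {π π' : ℝ → V} (h : EqOn π π' (Icc 0 T)) :
    EqOn (pitmanWord α αv l π) (pitmanWord α αv l π') (Icc 0 T) := by
  induction l with
  | nil => exact h
  | cons s l ih => exact pitman_congr (α s) (αv s) ih

theorem pitmanWord_smul_inv_smul {c : B → ℝ} (hc : ∀ s, 0 < c s) (l : List B) :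
    pitmanWord (fun s => c s • α s) (fun s => (c s)⁻¹ • αv s) l = pitmanWord α αv l := by
  simp only [pitmanWord, pitman_smul_inv_smul _ _ (hc _)]

/-- Continuity of all the real functions `αv s ∘ π` on `I`. This is the only continuity of a path
that matters for its Pitman transforms, and it needs no topology on `V`. -/
def DualContinuousOn (π : ℝ → V) (I : Set ℝ) : Prop :=
  ∀ s, ContinuousOn (fun t => αv s (π t)) I

variable {α αv} {π : ℝ → V}

theorem DualContinuousOn.pitman (h : DualContinuousOn αv π (Ici 0)) (β : V) (s : B) :
    DualContinuousOn αv (pitman β (αv s) π) (Ici 0) := fun s' => by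
  simp only [dual_pitman_apply]
  exact (h s').sub ((continuousOn_runningInf (h s)).const_mul _)

theorem DualContinuousOn.pitmanWord (h : DualContinuousOn αv π (Ici 0)) (α : B → V) (l : List B) :
    DualContinuousOn αv (pitmanWord α αv l π) (Ici 0) := by
  induction l with
  | nil => exact h
  | cons s l ih => exact ih.pitman (α s) s

end Pitman

section Braid

open CoxeterSystem (alternatingWord alternatingWord_succ)
open Polynomial.Chebyshev

variable {V : Type*} [AddCommGroup V] [Module ℝ V] {B : Type*} {α : B → V}
  {αv : B → Module.Dual ℝ V} {a b : B} {x : ℝ}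

/-- The closed form of the composite Pitman transform along the alternating word of length `n` that
begins with `a`, when `αv a (α b) = αv b (α a) = -x`. -/
noncomputable def nestedPitman (α : B → V) (αv : B → Module.Dual ℝ V) (x : ℝ) (a b : B) (n : ℕ)
    (π : ℝ → V) : ℝ → V := fun t =>
  π t - nestedInf x n 0 (fun s => αv a (π s)) (fun s => αv b (π s)) t • α a
    - nestedInf x (n - 1) 0 (fun s => αv b (π s)) (fun s => αv a (π s)) t • α b

theorem nestedPitman_two_mul_pitman (ha : αv a (α a) = 2) (hba : αv b (α a) = -x) {e : ℕ}
    (hS : ∀ i < 2 * e + 1, 0 ≤ (S ℝ ↑i).eval x) {π : ℝ → V}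
    (hπ : DualContinuousOn αv π (Ici 0)) :
    nestedPitman α αv x a b (2 * e) (pitman (α a) (αv a) π) =
      nestedPitman α αv x a b (2 * e + 1) π := by
  funext t
  simp only [nestedPitman, dual_pitman_apply, ha, hba, neg_mul, sub_neg_eq_add]
  have hb : nestedInf x (2 * e - 1) 0
      (fun s => αv b (π s) + x * runningInf (fun s => αv a (π s)) s)
      (fun s => αv a (π s) - 2 * runningInf (fun s => αv a (π s)) s) =
        nestedInf x (2 * e) 0 (fun s => αv b (π s)) (fun s => αv a (π s)) := by
    cases e with
    | zero => rfl
    | succ e => exact nestedInf_odd (hπ a) (hπ b) fun i hi => hS i (by omega)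
  rw [hb, nestedInf_even (hπ a) (hπ b) fun i hi => hS i (by omega), pitman_apply,
    Nat.add_sub_cancel, Nat.cast_zero, S_zero, Polynomial.eval_one]
  module

theorem nestedPitman_two_mul_add_one_pitman (hb : αv b (α b) = 2) (hab : αv a (α b) = -x) {e : ℕ}
    (hS : ∀ i < 2 * e + 2, 0 ≤ (S ℝ ↑i).eval x) {π : ℝ → V}
    (hπ : DualContinuousOn αv π (Ici 0)) :
    nestedPitman α αv x a b (2 * e + 1) (pitman (α b) (αv b) π) =
      nestedPitman α αv x a b (2 * e + 2) π := by
  funext t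
  simp only [nestedPitman, dual_pitman_apply, hb, hab, neg_mul, sub_neg_eq_add]
  rw [nestedInf_odd (hπ b) (hπ a) fun i hi => hS i (by omega), Nat.add_sub_cancel,
    nestedInf_even (hπ b) (hπ a) fun i hi => hS i (by omega), pitman_apply,
    Nat.succ_sub_one, Nat.cast_zero, S_zero, Polynomial.eval_one]
  module

theorem pitmanWord_alternatingWord_eq_nestedPitman (ha : αv a (α a) = 2) (hb : αv b (α b) = 2)
    (hab : αv a (α b) = -x) (hba : αv b (α a) = -x) {n : ℕ}
    (hS : ∀ i < n, 0 ≤ (S ℝ ↑i).eval x) {π : ℝ → V} (hπ : DualContinuousOn αv π (Ici 0)) :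
    pitmanWord α αv (if Even n then alternatingWord a b n else alternatingWord b a n) π =
      nestedPitman α αv x a b n π := by
  induction n generalizing π with
  | zero =>
    funext t
    simp [nestedPitman, nestedInf_zero, alternatingWord, pitmanWord]
  | succ n ih =>
    replace ih {π : ℝ → V} := ih (π := π) fun i hi => hS i (hi.trans n.lt_succ_self)
    rcases n.even_or_odd' with ⟨e, rfl | rfl⟩
    · rw [if_pos (even_two_mul e)] at ih
      rw [if_neg (by simp), alternatingWord_succ, pitmanWord_concat, ih (hπ.pitman (α a) a),
        nestedPitman_two_mul_pitman ha hba hS hπ]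
    · rw [if_neg (by simp)] at ih
      rw [if_pos (by simp [Nat.even_add_one]), alternatingWord_succ, pitmanWord_concat,
        ih (hπ.pitman (α b) b), nestedPitman_two_mul_add_one_pitman hb hab hS hπ]

theorem nestedPitman_comm {n : ℕ} (hS : (S ℝ ↑n).eval x = 0) (π : ℝ → V) :
    nestedPitman α αv x a b (n + 1) π = nestedPitman α αv x b a (n + 1) π := by
  funext t
  have hlast : ∀ f g, nestedInf x (n + 1) 0 f g = nestedInf x n 0 f g := fun f g =>
    nestedInf_succ_eq_of_eval_S_eq_zero (by rwa [zero_add])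
  rw [nestedPitman, nestedPitman, Nat.add_sub_cancel, hlast, hlast, sub_right_comm]

theorem pitmanWord_alternatingWord_comm_of_symm (ha : αv a (α a) = 2) (hb : αv b (α b) = 2)
    (hab : αv a (α b) = -x) (hba : αv b (α a) = -x) {n : ℕ}
    (hS : ∀ i ≤ n, 0 ≤ (S ℝ ↑i).eval x) (hSn : (S ℝ ↑n).eval x = 0) {π : ℝ → V}
    (hπ : DualContinuousOn αv π (Ici 0)) :
    pitmanWord α αv (alternatingWord a b (n + 1)) π =
      pitmanWord α αv (alternatingWord b a (n + 1)) π := by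
  replace hS : ∀ i < n + 1, 0 ≤ (S ℝ ↑i).eval x := fun i hi => hS i (Nat.le_of_lt_succ hi)
  have h₁ := pitmanWord_alternatingWord_eq_nestedPitman ha hb hab hba hS hπ
  have h₂ := pitmanWord_alternatingWord_eq_nestedPitman hb ha hba hab hS hπ
  have h₃ := nestedPitman_comm (α := α) (αv := αv) (a := a) (b := b) hSn π
  split_ifs at h₁ h₂ <;> rw [h₁, h₂, h₃]

/-- Rescaling the pair indexed by `a` changes no Pitman transform and makes the two off-diagonal
pairings equal. -/
theorem pitmanWord_alternatingWord_comm_of_mul_eq_sq (ha : αv a (α a) = 2) (hb : αv b (α b) = 2)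
    (hne : a ≠ b) (hx : 0 < x) (hba : αv b (α a) < 0)
    (hprod : αv a (α b) * αv b (α a) = x ^ 2) {n : ℕ}
    (hS : ∀ i ≤ n, 0 ≤ (S ℝ ↑i).eval x) (hSn : (S ℝ ↑n).eval x = 0) {π : ℝ → V}
    (hπ : DualContinuousOn αv π (Ici 0)) :
    pitmanWord α αv (alternatingWord a b (n + 1)) π =
      pitmanWord α αv (alternatingWord b a (n + 1)) π := by
  classical
  let c : B → ℝ := Pi.mulSingle a (-x / αv b (α a))
  have hca : c a = -x / αv b (α a) := Pi.mulSingle_eq_same ..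
  have hcb : c b = 1 := Pi.mulSingle_eq_of_ne hne.symm _
  have hc : ∀ s, 0 < c s := fun s => by
    rcases eq_or_ne s a with rfl | hs
    · exact hca ▸ div_pos_of_neg_of_neg (neg_lt_zero.2 hx) hba
    · simp [c, hs]
  have hcane := (hc a).ne'
  rw [← pitmanWord_smul_inv_smul α αv hc, ← pitmanWord_smul_inv_smul α αv hc]
  refine pitmanWord_alternatingWord_comm_of_symm (x := x) ?_ ?_ ?_ ?_ hS hSn
    fun s => (hπ s).const_mul (c s)⁻¹
  · simp [ha, hcane]
  · simp [hb, hcb]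
  · simp only [LinearMap.smul_apply, map_smul, smul_eq_mul, hca, hcb]
    field_simp
    linarith
  · simp [hca, hcb, hba.ne]

theorem pitmanWord_alternatingWord_comm (ha : αv a (α a) = 2) (hb : αv b (α b) = 2) (hne : a ≠ b)
    {m : ℕ} (hm : 2 ≤ m)
    (h : (m = 2 ∧ αv a (α b) = 0 ∧ αv b (α a) = 0) ∨
      (αv a (α b) < 0 ∧ αv b (α a) < 0 ∧
        αv a (α b) * αv b (α a) = 4 * Real.cos (Real.pi / m) ^ 2))
    {π : ℝ → V} (hπ : DualContinuousOn αv π (Ici 0)) :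
    pitmanWord α αv (alternatingWord a b m) π = pitmanWord α αv (alternatingWord b a m) π := by
  obtain ⟨n, rfl⟩ : ∃ n, m = n + 1 := ⟨m - 1, by omega⟩
  have hS : ∀ i ≤ n, 0 ≤ (S ℝ ↑i).eval (2 * Real.cos (Real.pi / ↑(n + 1))) := fun i hi =>
    eval_S_two_mul_cos_nonneg hm (Nat.lt_succ_of_le hi)
  have hSn := eval_S_two_mul_cos_eq_zero hm rfl
  rcases h with ⟨hn, hab, hba⟩ | ⟨hab, hba, hprod⟩
  · have hx : 2 * Real.cos (Real.pi / ↑(n + 1)) = 0 := by simp [hn]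
    rw [hx] at hS hSn
    exact pitmanWord_alternatingWord_comm_of_symm ha hb (by simp [hab]) (by simp [hba]) hS hSn hπ
  · have hx : 0 ≤ 2 * Real.cos (Real.pi / ↑(n + 1)) := by
      simpa using hS 1 (Nat.le_of_succ_le_succ hm)
    refine pitmanWord_alternatingWord_comm_of_mul_eq_sq ha hb hne (hx.lt_of_ne' fun hx0 => ?_) hba
      (by rw [hprod]; ring) hS hSn hπ
    nlinarith [mul_pos_of_neg_of_neg hab hba]

end Braid

section Reflection

open Module Polynomial.Chebyshev

theorem reflection_mul_reflection_pow_apply_left {R V : Type*} [CommRing R] [AddCommGroup V]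
    [Module R V] {x y : V} {f g : Dual R V} {c : R} (hf : f x = 2) (hg : g y = 2) (hfy : f y = -c)
    (hgx : g x = -c) (k : ℕ) :
    ((reflection hf * reflection hg) ^ k) x =
      (S R (2 * k)).eval c • x + (S R (2 * k - 1)).eval c • y := by
  induction k with
  | zero => simp
  | succ k ih =>
    have hodd : (S R (2 * ↑(k + 1) - 1)).eval c =
        c * (S R (2 * k)).eval c - (S R (2 * k - 1)).eval c := by
      rw [show (2 * ((k + 1 : ℕ) : ℤ) - 1) = 2 * k + 1 by push_cast; ring, S_add_one]
      simp
    have heven : (S R (2 * ↑(k + 1))).eval c =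
        c * (S R (2 * ↑(k + 1) - 1)).eval c - (S R (2 * k)).eval c := by
      rw [S_eq, show (2 * ((k + 1 : ℕ) : ℤ) - 2) = 2 * k by push_cast; ring]
      simp
    rw [pow_succ', LinearEquiv.mul_apply, ih, heven, hodd]
    simp only [LinearEquiv.mul_apply, reflection_apply, map_add, map_sub, map_smul, hf, hg, hfy,
      hgx]
    module

theorem eval_S_two_mul_cos_two_mul_eq_one_iff {m : ℕ} (hm : 2 ≤ m) (k : ℕ) :
    (S ℝ (2 * k)).eval (2 * Real.cos (Real.pi / m)) = 1 ∧
      (S ℝ (2 * k - 1)).eval (2 * Real.cos (Real.pi / m)) = 0 ↔ m ∣ k := by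
  have hsin := (sin_pi_div_pos hm).ne'
  have hm0 : (m : ℝ) ≠ 0 := by positivity
  set θ := Real.pi / m with hθ
  have heven := S_two_mul_real_cos θ (2 * k)
  have hodd := S_two_mul_real_cos θ (2 * k - 1)
  push_cast at heven hodd
  rw [add_mul, one_mul, Real.sin_add] at heven
  rw [sub_add_cancel] at hodd
  have hcos : (S ℝ (2 * k)).eval (2 * Real.cos θ) = 1 ∧
      (S ℝ (2 * k - 1)).eval (2 * Real.cos θ) = 0 ↔ Real.cos (2 * k * θ) = 1 := by
    constructor
    · rintro ⟨h1, h0⟩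
      rw [h0, zero_mul] at hodd
      rw [h1, ← hodd, zero_mul, zero_add] at heven
      exact (mul_right_cancel₀ hsin heven).symm
    · intro h
      have h0 := Real.sin_eq_zero_iff_cos_eq.2 (Or.inl h)
      rw [h0, h, zero_mul, zero_add] at heven
      rw [h0] at hodd
      exact ⟨mul_right_cancel₀ hsin heven, (mul_eq_zero.1 hodd).resolve_right hsin⟩
  rw [hcos, Real.cos_eq_one_iff, ← Int.natCast_dvd_natCast]
  refine exists_congr fun n => ?_
  have hangle : 2 * k * θ = k / m * (2 * Real.pi) := by rw [hθ]; ring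
  rw [hangle, mul_left_inj' Real.two_pi_pos.ne', eq_div_iff hm0, eq_comm, mul_comm]
  exact_mod_cast Iff.rfl

theorem linearEquiv_eq_one_of_apply_eq {K V : Type*} [Field K] [AddCommGroup V] [Module K V]
    {x y : V} {f g : Dual K V} {c : K} (hf : f x = 2) (hg : g y = 2) (hfy : f y = -c)
    (hgx : g x = -c) (hc : 4 - c ^ 2 ≠ 0) {φ : V ≃ₗ[K] V} (hx : φ x = x) (hy : φ y = y)
    (hker : ∀ v, f v = 0 → g v = 0 → φ v = v) : φ = 1 := by
  ext v
  let p := (2 * f v + c * g v) / (4 - c ^ 2)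
  let q := (c * f v + 2 * g v) / (4 - c ^ 2)
  let r := v - p • x - q • y
  have hfr : f r = 0 := by
    simp only [r, p, q, map_sub, map_smul, hf, hfy, smul_eq_mul]
    field_simp
    ring
  have hgr : g r = 0 := by
    simp only [r, p, q, map_sub, map_smul, hg, hgx, smul_eq_mul]
    field_simp
    ring
  have hv : v = p • x + q • y + r := by simp only [r]; abel
  rw [hv]
  simp [hx, hy, hker r hfr hgr]

variable {V : Type*} [AddCommGroup V] [Module ℝ V] {x y : V} {f g : Dual ℝ V}

theorem reflection_mul_reflection_pow_eq_one {m : ℕ} (hm : 2 ≤ m) (hf : f x = 2) (hg : g y = 2)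
    (hfy : f y = -(2 * Real.cos (Real.pi / m))) (hgx : g x = -(2 * Real.cos (Real.pi / m))) :
    (reflection hf * reflection hg) ^ m = 1 := by
  obtain ⟨hS₁, hS₀⟩ := (eval_S_two_mul_cos_two_mul_eq_one_iff hm m).2 dvd_rfl
  have hdisc : 4 - (2 * Real.cos (Real.pi / m)) ^ 2 ≠ 0 := by
    have hsin := sin_pi_div_pos hm
    nlinarith [Real.sin_sq_add_cos_sq (Real.pi / m)]
  refine linearEquiv_eq_one_of_apply_eq hf hg hfy hgx hdisc ?_ ?_ fun v hfv hgv => ?_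
  · rw [reflection_mul_reflection_pow_apply_left hf hg hfy hgx, hS₁, hS₀, one_smul, zero_smul,
      add_zero]
  · have hinv : ((reflection hf * reflection hg) ^ m)⁻¹ =
        (reflection hg * reflection hf) ^ m := by
      rw [← inv_pow, mul_inv_rev, reflection_inv, reflection_inv]
    have hy : ((reflection hf * reflection hg) ^ m)⁻¹ y = y := by
      rw [hinv, reflection_mul_reflection_pow_apply_left hg hf hgx hfy, hS₁, hS₀, one_smul,
        zero_smul, add_zero]
    exact (LinearEquiv.eq_symm_apply _).1 hy.symm
  · have hfix : (reflection hf * reflection hg) v = v := by simp [reflection_apply, hfv, hgv]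
    rw [LinearEquiv.coe_pow]
    exact Function.iterate_fixed hfix m

theorem orderOf_reflection_mul_reflection {m : ℕ} (hm : m ≠ 1) (hxy : LinearIndependent ℝ ![x, y])
    (hf : f x = 2) (hg : g y = 2) (hfy : f y = -(2 * Real.cos (Real.pi / m)))
    (hgx : g x = -(2 * Real.cos (Real.pi / m))) :
    orderOf (reflection hf * reflection hg) = m := by
  have hcoeff : ∀ k : ℕ, (reflection hf * reflection hg) ^ k = 1 →
      (S ℝ (2 * k)).eval (2 * Real.cos (Real.pi / m)) = 1 ∧
        (S ℝ (2 * k - 1)).eval (2 * Real.cos (Real.pi / m)) = 0 := fun k hk => by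
    have h := reflection_mul_reflection_pow_apply_left hf hg hfy hgx k
    rw [hk] at h
    refine hxy.eq_of_pair (s' := 1) (t' := 0) ?_
    simpa using h.symm
  rcases Nat.eq_zero_or_pos m with rfl | hm0
  · refine orderOf_eq_zero_iff'.2 fun k hk h => ?_
    have h0 := (hcoeff k h).2
    simp [S_eval_two, hk.ne'] at h0
  · have hm2 : 2 ≤ m := by omega
    exact Nat.dvd_antisymm
      (orderOf_dvd_of_pow_eq_one (reflection_mul_reflection_pow_eq_one hm2 hf hg hfy hgx))
      ((eval_S_two_mul_cos_two_mul_eq_one_iff hm2 _).1 (hcoeff _ (pow_orderOf_eq_one _)))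

end Reflection

section GeometricRepresentation

open Module

variable {B : Type*} (M : CoxeterMatrix B)

/-- The simple coroot `e_j ↦ -2 cos (π / M i j)` of the geometric (Tits) representation of the
Coxeter group of `M` on `B →₀ ℝ`, whose simple roots are the basis vectors `e_j`. For `M i j = 0`,
i.e. a product of infinite order, the junk value `π / 0 = 0` yields the usual entry `-2`. -/
noncomputable def simpleCoroot (i : B) : Dual ℝ (B →₀ ℝ) :=
  Finsupp.linearCombination ℝ fun j => -(2 * Real.cos (Real.pi / M i j))

theorem simpleCoroot_single (i j : B) :
    simpleCoroot M i (Finsupp.single j 1) = -(2 * Real.cos (Real.pi / M i j)) := by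
  simp [simpleCoroot]

theorem simpleCoroot_single_self (i : B) : simpleCoroot M i (Finsupp.single i 1) = 2 := by
  simp [simpleCoroot_single]

/-- The action of the `i`-th generator in the geometric representation. -/
noncomputable def simpleReflection (i : B) : (B →₀ ℝ) ≃ₗ[ℝ] (B →₀ ℝ) :=
  reflection (simpleCoroot_single_self M i)

theorem orderOf_simpleReflection_mul_simpleReflection {a b : B} (hab : a ≠ b) :
    orderOf (simpleReflection M a * simpleReflection M b) = M a b := by
  refine orderOf_reflection_mul_reflection (M.off_diagonal a b hab) ?_ _ _
    (simpleCoroot_single M a b) (by rw [simpleCoroot_single, M.symmetric])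
  refine LinearIndependent.pair_iff.2 fun s t h => ?_
  exact ⟨by simpa [hab.symm] using DFunLike.congr_fun h a,
    by simpa [hab] using DFunLike.congr_fun h b⟩

theorem isLiftable_simpleReflection : M.IsLiftable (simpleReflection M) := fun a b => by
  rcases eq_or_ne a b with rfl | hab
  · rw [M.diagonal, pow_one]
    exact LinearEquiv.ext (involutive_reflection (simpleCoroot_single_self M a))
  · rw [← orderOf_simpleReflection_mul_simpleReflection M hab, pow_orderOf_eq_one]

variable {M} {W : Type*} [Group W] (cs : CoxeterSystem M W)

theorem orderOf_simple_mul_simple {a b : B} (hab : a ≠ b) :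
    orderOf (cs.simple a * cs.simple b) = M a b := by
  refine Nat.dvd_antisymm (orderOf_dvd_of_pow_eq_one (cs.simple_mul_simple_pow a b)) ?_
  have h := orderOf_map_dvd (cs.lift ⟨_, isLiftable_simpleReflection M⟩)
    (cs.simple a * cs.simple b)
  rwa [map_mul, cs.lift_apply_simple, cs.lift_apply_simple,
    orderOf_simpleReflection_mul_simpleReflection M hab] at h

open CoxeterSystem

theorem wordProd_alternatingWord_ne_swap {a b : B} (hab : a ≠ b) {n : ℕ} (hn : 0 < n)
    (hM : M a b = 0 ∨ n < M a b) :
    cs.wordProd (alternatingWord a b n) ≠ cs.wordProd (alternatingWord b a n) := by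
  intro h
  have hpow : (cs.simple a * cs.simple b) ^ n = 1 := by
    have hinv : cs.simple b * cs.simple a = (cs.simple a * cs.simple b)⁻¹ := by simp
    simp only [cs.prod_alternatingWord_eq_mul_pow, hinv, inv_pow] at h
    obtain ⟨k, rfl | rfl⟩ := Nat.even_or_odd' n
    · have heven : Even (2 * k) := even_two_mul k
      simp only [heven, if_true, one_mul, Nat.mul_div_cancel_left k two_pos] at h
      rw [two_mul, pow_add, eq_inv_iff_mul_eq_one.1 h]
    · have hodd : ¬ Even (2 * k + 1) := by simp
      simp only [hodd, if_false, show (2 * k + 1) / 2 = k by omega] at h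
      calc (cs.simple a * cs.simple b) ^ (2 * k + 1)
          = cs.simple a * (cs.simple b * (cs.simple a * cs.simple b) ^ k) *
              (cs.simple a * cs.simple b) ^ k := by
            rw [two_mul, add_right_comm, pow_add, pow_succ']
            group
        _ = 1 := by
            rw [h]
            simp
  have hdvd := orderOf_simple_mul_simple cs hab ▸ orderOf_dvd_of_pow_eq_one hpow
  rcases hM with h0 | hlt
  · exact hn.ne' (zero_dvd_iff.1 (h0 ▸ hdvd))
  · exact Nat.not_dvd_of_pos_of_lt hn hlt hdvd

end GeometricRepresentation

section Exchange

open CoxeterSystem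

variable {B W : Type*} [Group W] {M : CoxeterMatrix B} (cs : CoxeterSystem M W)

theorem prod_map_alternatingWord_two_mul {G : Type*} [Monoid G] (f : B → G) (a b : B) (k : ℕ) :
    ((alternatingWord a b (2 * k)).map f).prod = (f a * f b) ^ k := by
  induction k with
  | zero => simp [alternatingWord]
  | succ k ih =>
    rw [mul_add, mul_one, alternatingWord_succ, alternatingWord_succ, pow_succ, ← ih]
    simp

theorem rightInvSeq_eq_leftInvSeq {ω : List B} (hω : cs.wordProd ω = 1) :
    cs.rightInvSeq ω = cs.leftInvSeq ω := by
  refine List.ext_getElem (by simp) fun k hr hl => ?_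
  have hright := cs.wordProd_mul_getD_rightInvSeq ω k
  have hleft := cs.getD_leftInvSeq_mul_wordProd ω k
  rw [hω, one_mul, List.getD_eq_getElem _ _ hr] at hright
  rw [hω, mul_one, List.getD_eq_getElem _ _ hl] at hleft
  rw [hright, hleft]

theorem leftInvSeq_alternatingWord_two_mul (a b : B) :
    cs.leftInvSeq (alternatingWord a b (2 * M a b)) =
      (cs.leftInvSeq (alternatingWord a b (2 * M a b))).take (M a b) ++
        (cs.leftInvSeq (alternatingWord a b (2 * M a b))).take (M a b) := by
  have hlen : (cs.leftInvSeq (alternatingWord a b (2 * M a b))).length = 2 * M a b := by simp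
  conv_lhs => rw [← List.take_append_drop (M a b) (cs.leftInvSeq (alternatingWord a b (2 * M a b)))]
  congr 1
  refine List.ext_getElem (by simp; omega) fun k hk hk' => ?_
  have hkM : k < M a b := by simp at hk'; omega
  rw [List.getElem_drop, List.getElem_take,
    cs.getElem_leftInvSeq_alternatingWord a b _ _ (by omega),
    cs.getElem_leftInvSeq_alternatingWord a b _ _ (by omega),
    cs.prod_alternatingWord_eq_mul_pow, cs.prod_alternatingWord_eq_mul_pow]
  have hodd : ∀ j, ¬ Even (2 * j + 1) := by simp
  have hdiv : ∀ j, (2 * j + 1) / 2 = j := by omega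
  rw [if_neg (hodd _), if_neg (hodd _), hdiv, hdiv, pow_add, cs.simple_mul_simple_pow', one_mul]

open Classical in
/-- The action of the `i`-th generator on `W × ZMod 2` which, along a word, conjugates the first
component and counts in the second how often that component occurs among the right inversions of
the word. -/
noncomputable def inversionCounter (i : B) : Function.End (W × ZMod 2) := fun p =>
  (cs.simple i * p.1 * cs.simple i, p.2 + if p.1 = cs.simple i then 1 else 0)

open Classical in
theorem prod_map_inversionCounter (ω : List B) (p : W × ZMod 2) :
    (ω.map (inversionCounter cs)).prod p =
      (cs.wordProd ω * p.1 * (cs.wordProd ω)⁻¹, p.2 + (cs.rightInvSeq ω).count p.1) := by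
  induction ω with
  | nil => simp; rfl
  | cons i ω ih =>
    rw [List.map_cons, List.prod_cons]
    change inversionCounter cs i ((ω.map (inversionCounter cs)).prod p) = _
    have hconj : cs.wordProd ω * p.1 * (cs.wordProd ω)⁻¹ = cs.simple i ↔
        (cs.wordProd ω)⁻¹ * cs.simple i * cs.wordProd ω = p.1 := by
      rw [mul_inv_eq_iff_eq_mul, mul_assoc, inv_mul_eq_iff_eq_mul, eq_comm]
    rw [ih]
    ext1
    · simp [inversionCounter, cs.wordProd_cons, mul_assoc]
    · simp only [inversionCounter, hconj, rightInvSeq, List.count_cons, beq_iff_eq]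
      push_cast
      ring

theorem isLiftable_inversionCounter : M.IsLiftable (inversionCounter cs) := fun a b => by
  classical
  have hprod : cs.wordProd (alternatingWord a b (2 * M a b)) = 1 := by
    simp [cs.prod_alternatingWord_eq_mul_pow]
  rw [← prod_map_alternatingWord_two_mul]
  funext p
  rw [prod_map_inversionCounter, hprod, rightInvSeq_eq_leftInvSeq cs hprod,
    leftInvSeq_alternatingWord_two_mul, List.count_append, Nat.cast_add,
    CharTwo.add_self_eq_zero]
  simp
  rfl

theorem count_rightInvSeq_eq_of_wordProd_eq [DecidableEq W] {ω ω' : List B}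
    (h : cs.wordProd ω = cs.wordProd ω') (t : W) :
    ((cs.rightInvSeq ω).count t : ZMod 2) = (cs.rightInvSeq ω').count t := by
  have hlift : ∀ ω, cs.lift ⟨_, isLiftable_inversionCounter cs⟩ (cs.wordProd ω) =
      (ω.map (inversionCounter cs)).prod := fun ω => by
    rw [CoxeterSystem.wordProd, map_list_prod, List.map_map]
    congr 2
    exact funext (cs.lift_apply_simple (isLiftable_inversionCounter cs))
  have hcount := congrArg (fun φ => (cs.lift ⟨_, isLiftable_inversionCounter cs⟩ φ (t, 0)).2) h
  simp only [hlift, prod_map_inversionCounter, zero_add] at hcount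
  convert hcount

theorem isReduced_concat_of_isRightDescent {ω : List B} {w : W} {i : B}
    (hω : cs.IsReduced ω) (hw : w * cs.simple i = cs.wordProd ω) (h : cs.IsRightDescent w i) :
    cs.IsReduced (ω.concat i) := by
  rw [CoxeterSystem.IsReduced, cs.wordProd_concat, ← hw, cs.simple_mul_simple_cancel_right,
    List.length_concat, ← hω, ← hw, cs.isRightDescent_iff.1 h]

theorem simple_mem_rightInvSeq {ω : List B} {i : B}
    (h : cs.IsRightDescent (cs.wordProd ω) i) : cs.simple i ∈ cs.rightInvSeq ω := by
  classical
  obtain ⟨υ, hυ, hυprod⟩ := cs.exists_isReduced (cs.wordProd ω * cs.simple i)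
  have hprod : cs.wordProd ω = cs.wordProd (υ.concat i) := by
    rw [cs.wordProd_concat, ← hυprod, cs.simple_mul_simple_cancel_right]
  have hnodup := (isReduced_concat_of_isRightDescent cs hυ hυprod h).nodup_rightInvSeq
  have hone : (cs.rightInvSeq (υ.concat i)).count (cs.simple i) = 1 :=
    List.count_eq_one_of_mem hnodup (by rw [cs.rightInvSeq_concat]; simp)
  have hparity := count_rightInvSeq_eq_of_wordProd_eq cs hprod (cs.simple i)
  by_contra hmem
  rw [hone, List.count_eq_zero_of_not_mem hmem] at hparity
  simp at hparity

theorem exists_wordProd_eq_mul_of_mem_rightInvSeq {ω : List B} {t : W} (ht : t ∈ cs.rightInvSeq ω) :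
    ∃ υ, cs.wordProd υ = cs.wordProd ω * t ∧ υ.length + 1 = ω.length := by
  obtain ⟨j, hj, rfl⟩ := List.getElem_of_mem ht
  refine ⟨ω.eraseIdx j, ?_, List.length_eraseIdx_add_one (by simpa using hj)⟩
  rw [← cs.wordProd_mul_getD_rightInvSeq, List.getD_eq_getElem _ _ hj]

theorem rightInvSeq_append (υ ω : List B) :
    cs.rightInvSeq (υ ++ ω) =
      (cs.rightInvSeq υ).map (MulAut.conj (cs.wordProd ω)⁻¹) ++ cs.rightInvSeq ω := by
  induction υ with
  | nil => simp
  | cons i υ ih => simp [CoxeterSystem.rightInvSeq, ih, cs.wordProd_append, mul_assoc]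

end Exchange

section Matsumoto

open CoxeterSystem

variable {B W : Type*} [Group W] {M : CoxeterMatrix B} (cs : CoxeterSystem M W)

theorem simple_notMem_rightInvSeq_alternatingWord {a b : B} (hab : a ≠ b) {k : ℕ}
    (hM : M a b = 0 ∨ k < M a b) :
    cs.simple a ∉ cs.rightInvSeq (alternatingWord a b k) := by
  induction k with
  | zero => simp [alternatingWord]
  | succ k ih =>
    have hne := wordProd_alternatingWord_ne_swap cs hab k.succ_pos hM
    rw [alternatingWord_succ b a, cs.wordProd_concat, alternatingWord_succ'] at hne
    rw [alternatingWord_succ', CoxeterSystem.rightInvSeq, List.mem_cons, not_or]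
    refine ⟨fun h => hne ?_, ih (hM.imp_right k.lt_succ_self.trans)⟩
    rw [cs.wordProd_cons, h]
    group

theorem exists_isReduced_append_alternatingWord {w : W} {a b : B} (hab : a ≠ b)
    (ha : cs.IsRightDescent w a) (hb : cs.IsRightDescent w b) {k : ℕ}
    (hM : M a b = 0 ∨ k ≤ M a b) :
    ∃ υ, cs.wordProd (υ ++ alternatingWord a b k) = w ∧
      cs.IsReduced (υ ++ alternatingWord a b k) := by
  induction k generalizing a b with
  | zero =>
    obtain ⟨υ, hυ, rfl⟩ := cs.exists_isReduced w
    exact ⟨υ, by simp [alternatingWord], by simpa [alternatingWord] using hυ⟩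
  | succ k ih =>
    rw [M.symmetric] at hM
    obtain ⟨υ, rfl, hυ⟩ := ih hab.symm hb ha (hM.imp_right k.le_succ.trans)
    have hmem := simple_mem_rightInvSeq cs hb
    rw [rightInvSeq_append, List.mem_append, List.mem_map] at hmem
    obtain ⟨t, ht, hconj⟩ := hmem.resolve_right
      (simple_notMem_rightInvSeq_alternatingWord cs hab.symm hM)
    obtain ⟨υ', hυ', hlen⟩ := exists_wordProd_eq_mul_of_mem_rightInvSeq cs ht
    have hprod : cs.wordProd (υ' ++ alternatingWord a b (k + 1)) =
        cs.wordProd (υ ++ alternatingWord b a k) := by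
      rw [cs.wordProd_append, hυ', alternatingWord_succ, cs.wordProd_concat, ← hconj,
        cs.wordProd_append, MulAut.conj_apply]
      group
      rw [mul_assoc _ t t, (cs.isReflection_of_mem_rightInvSeq υ ht).mul_self, mul_one]
    refine ⟨υ', hprod, ?_⟩
    rw [CoxeterSystem.IsReduced, hprod, hυ, List.length_append, List.length_append,
      length_alternatingWord, length_alternatingWord, ← hlen]
    ring

/-- The replacement of one factor `s_a s_b s_a ⋯` with `M a b` letters, `a ≠ b` and `M a b ≠ 0`, of
a word by the factor `s_b s_a s_b ⋯` of the same length. -/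
inductive BraidMove (M : CoxeterMatrix B) : List B → List B → Prop
  | intro (υ ω : List B) {a b : B} (hab : a ≠ b) (hM : M a b ≠ 0) :
    BraidMove M (υ ++ braidWord M a b ++ ω) (υ ++ braidWord M b a ++ ω)

theorem BraidMove.concat {l l' : List B} (h : BraidMove M l l') (i : B) :
    BraidMove M (l.concat i) (l'.concat i) := by
  obtain ⟨υ, ω, hab, hM⟩ := h
  simpa using BraidMove.intro υ (ω ++ [i]) hab hM

theorem isRightDescent_concat {l : List B} {i : B} (h : cs.IsReduced (l.concat i)) :
    cs.IsRightDescent (cs.wordProd (l.concat i)) i := by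
  rw [CoxeterSystem.IsRightDescent, h, cs.wordProd_concat, cs.simple_mul_simple_cancel_right,
    List.length_concat]
  exact Nat.lt_succ_of_le (cs.length_wordProd_le l)

theorem isReduced_of_isReduced_concat {l : List B} {i : B} (h : cs.IsReduced (l.concat i)) :
    cs.IsReduced l := by
  simpa using h.take l.length

theorem ne_zero_of_isRightDescent {w : W} {a b : B} (hab : a ≠ b) (ha : cs.IsRightDescent w a)
    (hb : cs.IsRightDescent w b) : M a b ≠ 0 := fun h0 => by
  obtain ⟨υ, hw, hυ⟩ :=
    exists_isReduced_append_alternatingWord cs hab ha hb (k := cs.length w + 1) (Or.inl h0)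
  have hlen := hυ.eq
  rw [hw, List.length_append, length_alternatingWord] at hlen
  omega

theorem exists_append_braidWord_eq_concat (υ : List B) {a b : B} (h : M a b ≠ 0) :
    ∃ ω : List B, υ ++ braidWord M a b = ω.concat b := by
  obtain ⟨m, hm⟩ := Nat.exists_eq_succ_of_ne_zero h
  refine ⟨υ ++ alternatingWord b a m, ?_⟩
  unfold braidWord
  rw [hm, alternatingWord_succ]
  simp

theorem exists_braidMove_of_isRightDescent {w : W} {a b : B} (hab : a ≠ b)
    (ha : cs.IsRightDescent w a) (hb : cs.IsRightDescent w b) :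
    ∃ u v : List B, BraidMove M (u.concat a) (v.concat b) ∧
      (cs.wordProd (u.concat a) = w ∧ cs.IsReduced (u.concat a)) ∧
      (cs.wordProd (v.concat b) = w ∧ cs.IsReduced (v.concat b)) := by
  obtain ⟨υ, rfl, hυ⟩ := exists_isReduced_append_alternatingWord cs hab ha hb (Or.inr le_rfl)
  have hM := ne_zero_of_isRightDescent cs hab ha hb
  have hM' : M b a ≠ 0 := M.symmetric a b ▸ hM
  have hprod : cs.wordProd (υ ++ braidWord M b a) = cs.wordProd (υ ++ braidWord M a b) := by
    rw [cs.wordProd_append, cs.wordProd_append, cs.wordProd_braidWord_eq]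
  have hred : cs.IsReduced (υ ++ braidWord M b a) := by
    rw [CoxeterSystem.IsReduced, hprod, hυ.eq]
    simp [M.symmetric b a]
  have hmove : BraidMove M (υ ++ braidWord M b a) (υ ++ braidWord M a b) := by
    simpa using BraidMove.intro υ [] hab.symm hM'
  obtain ⟨u, hu⟩ := exists_append_braidWord_eq_concat υ hM'
  obtain ⟨v, hv⟩ := exists_append_braidWord_eq_concat υ hM
  exact ⟨u, v, hu ▸ hv ▸ hmove, hu ▸ ⟨hprod, hred⟩, hv ▸ ⟨rfl, hυ⟩⟩

/-- Matsumoto's theorem. -/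
theorem reflTransGen_braidMove {l l' : List B} (h : cs.wordProd l = cs.wordProd l')
    (hl : cs.IsReduced l) (hl' : cs.IsReduced l') : Relation.ReflTransGen (BraidMove M) l l' := by
  induction hn : cs.length (cs.wordProd l) generalizing l l' with
  | zero =>
    rw [List.length_eq_zero_iff.1 (hl.symm.trans hn),
      List.length_eq_zero_iff.1 (hl'.symm.trans (h ▸ hn))]
  | succ n ih =>
    have ih_concat : ∀ {i : B} {u u' : List B}, cs.wordProd (u.concat i) = cs.wordProd l →
        cs.wordProd (u'.concat i) = cs.wordProd l → cs.IsReduced (u.concat i) →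
        cs.IsReduced (u'.concat i) →
        Relation.ReflTransGen (BraidMove M) (u.concat i) (u'.concat i) :=
      fun {i u u'} hu hu' hred hred' => by
        have hlen : cs.length (cs.wordProd u) = n := by
          have hlen := hred.eq
          rw [hu, hn, List.length_concat] at hlen
          rw [isReduced_of_isReduced_concat cs hred, ← Nat.succ_injective hlen]
        rw [← hu', cs.wordProd_concat, cs.wordProd_concat] at hu
        exact (ih (mul_right_cancel hu) (isReduced_of_isReduced_concat cs hred)
          (isReduced_of_isReduced_concat cs hred') hlen).lift (·.concat i)
            fun _ _ hmove => hmove.concat i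
    obtain rfl | ⟨u, a, rfl⟩ := l.eq_nil_or_concat
    · simp at hn
    obtain rfl | ⟨u', b, rfl⟩ := l'.eq_nil_or_concat
    · rw [h] at hn
      simp at hn
    rcases eq_or_ne a b with rfl | hab
    · exact ih_concat rfl h.symm hl hl'
    obtain ⟨v, v', hmove, ⟨hv, hvred⟩, hv', hvred'⟩ := exists_braidMove_of_isRightDescent cs hab
      (isRightDescent_concat cs hl) (h ▸ isRightDescent_concat cs hl')
    exact (ih_concat rfl hv hl hvred).trans (.head hmove (ih_concat hv' h.symm hvred' hl'))

end Matsumoto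

section WellDefined

open CoxeterSystem (alternatingWord)

variable {V : Type*} [AddCommGroup V] [Module ℝ V] {B : Type*} {M : CoxeterMatrix B} {α : B → V}
  {αv : B → Module.Dual ℝ V}

theorem BraidMove.pitmanWord_eq (hpair : ∀ s, αv s (α s) = 2)
    (hM : ∀ s s', s ≠ s' → M s s' ≠ 0 →
      (M s s' = 2 ∧ αv s (α s') = 0 ∧ αv s' (α s) = 0) ∨
      (αv s (α s') < 0 ∧ αv s' (α s) < 0 ∧
        αv s (α s') * αv s' (α s) = 4 * Real.cos (Real.pi / (M s s' : ℝ)) ^ 2))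
    {π : ℝ → V} (hπ : DualContinuousOn αv π (Ici 0)) {l l' : List B} (h : BraidMove M l l') :
    pitmanWord α αv l π = pitmanWord α αv l' π := by
  obtain @⟨υ, ω, a, b, hab, hM0⟩ := h
  have hM2 : 2 ≤ M a b := by
    have := M.off_diagonal a b hab
    omega
  simp only [pitmanWord_append]
  rw [CoxeterSystem.braidWord, CoxeterSystem.braidWord, M.symmetric b a,
    pitmanWord_alternatingWord_comm (hpair a) (hpair b) hab hM2 (hM a b hab hM0)
      (hπ.pitmanWord α ω)]

theorem DualContinuousOn.Icc_extend {T : ℝ} (hT : 0 ≤ T) {π : ℝ → V}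
    (hπ : DualContinuousOn αv π (Icc 0 T)) :
    DualContinuousOn αv (IccExtend hT ((Icc 0 T).domRestrict π)) (Ici 0) := fun s =>
  ((hπ s).domRestrict.Icc_extend' (h := hT)).continuousOn

theorem pitmanWord_well_defined_general {T : ℝ} {W : Type*} [Group W] (cs : CoxeterSystem M W)
    (hpair : ∀ s, αv s (α s) = 2)
    (hM : ∀ s s', s ≠ s' → M s s' ≠ 0 →
      (M s s' = 2 ∧ αv s (α s') = 0 ∧ αv s' (α s) = 0) ∨
      (αv s (α s') < 0 ∧ αv s' (α s) < 0 ∧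
        αv s (α s') * αv s' (α s) = 4 * Real.cos (Real.pi / (M s s' : ℝ)) ^ 2))
    {l l' : List B} (h : cs.wordProd l = cs.wordProd l') (hl : cs.IsReduced l)
    (hl' : cs.IsReduced l') {π : ℝ → V} (hπ : DualContinuousOn αv π (Icc 0 T)) :
    ∀ t ∈ Icc 0 T, pitmanWord α αv l π t = pitmanWord α αv l' π t := by
  intro t ht
  have hT : 0 ≤ T := ht.1.trans ht.2
  let π' := IccExtend hT ((Icc 0 T).domRestrict π)
  have hπ' : DualContinuousOn αv π' (Ici 0) := hπ.Icc_extend hT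
  have hext : EqOn π π' (Icc 0 T) := fun u hu =>
    (IccExtend_of_mem hT ((Icc 0 T).domRestrict π) hu).symm
  have heq : pitmanWord α αv l π' = pitmanWord α αv l' π' := by
    rw [← Relation.reflTransGen_eq_self (r := Eq)]
    exact (reflTransGen_braidMove cs h hl hl').lift (pitmanWord α αv · π')
      fun _ _ hmove => hmove.pitmanWord_eq hpair hM hπ'
  rw [pitmanWord_congr α αv l hext ht, heq, pitmanWord_congr α αv l' hext ht]

end WellDefined

/-- Well-definedness of `P_w`: in the Coxeter setting, the composition of Pitman
transforms along a reduced word for `w ∈ W` does not depend on the chosen reduced word. -/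
theorem pitmanWord_well_defined
    {V : Type*} [NormedAddCommGroup V] [NormedSpace ℝ V] [FiniteDimensional ℝ V]
    (T : ℝ) (hT : 0 < T)
    {B : Type*} [Fintype B] {W : Type*} [Group W]
    (M : CoxeterMatrix B) (cs : CoxeterSystem M W)
    (α : B → V) (αv : B → Module.Dual ℝ V)
    (hpair : ∀ s, αv s (α s) = 2)
    (ρ : W →* (V ≃ₗ[ℝ] V)) (hρinj : Function.Injective ρ)
    (hρs : ∀ s v, ρ (cs.simple s) v = v - αv s v • α s)
    (hM : ∀ s s' : B, s ≠ s' →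
      (M s s' = 2 ∧ αv s (α s') = 0 ∧ αv s' (α s) = 0) ∨
      (αv s (α s') < 0 ∧ αv s' (α s) < 0 ∧
        αv s (α s') * αv s' (α s) = 4 * Real.cos (Real.pi / (M s s' : ℝ)) ^ 2))
    (w : W) (l l' : List B)
    (hl : cs.wordProd l = w) (hl' : cs.wordProd l' = w)
    (hlred : cs.IsReduced l) (hl'red : cs.IsReduced l')
    (π : ℝ → V) (hcont : ContinuousOn π (Set.Icc 0 T)) (h0 : π 0 = 0) :
    ∀ t ∈ Set.Icc 0 T, pitmanWord α αv l π t = pitmanWord α αv l' π t := by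
  exact pitmanWord_well_defined_general cs hpair (fun s s' hs _ => hM s s' hs)
    (hl.trans hl'.symm) hlred hl'red
    fun s => (αv s).continuous_of_finiteDimensional.comp_continuousOn hcont
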